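/- Let p ≥ 1 be an integer and let W : ℝ → ℝ be bounded, of bounded variation, with W(x) = 0 for |x| ≥ 1 and ∫_ℝ W(α) dα = 1. Then there exists C > 0, depending only on W and p, such that for every integer T ≥ 2, every b ∈ (0, π/2), and every ω ∈ [0, 2π]: (2π/T) ∑_{s=0}^{T−1} |W_b(ω − u_s)| · |ω − u_s|^p ≤ C·(b^p + 1/(T·b)). -/

import Mathlib

/-- The periodized smoothing kernel `W_b(x) = (1/b) ∑_{k ∈ ℤ} W((x + 2kπ)/b)`. -/
noncomputable def Wper (W : ℝ → ℝ) (b x : ℝ) : ℝ :=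
  (1 / b) * ∑' k : ℤ, W ((x + 2 * (k : ℝ) * Real.pi) / b)

/-- A kernel supported in `[-1, 1]` has a single surviving term in its periodization. -/
lemma Wper_eq_of_abs_le_pi {W : ℝ → ℝ} (hsupp : ∀ x : ℝ, 1 ≤ |x| → W x = 0) {b x : ℝ}
    (hb : 0 < b) (hbpi : b ≤ Real.pi) (hx : |x| ≤ Real.pi) :
    Wper W b x = (1 / b) * W (x / b) := by
  unfold Wper
  rw [tsum_eq_single 0]
  · simp
  · intro k hk
    apply hsupp
    rw [abs_div, abs_of_pos hb, one_le_div hb]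
    have hk1 : (1 : ℝ) ≤ |(k : ℝ)| := by exact_mod_cast Int.one_le_abs hk
    have hshift : |2 * (k : ℝ) * Real.pi| = 2 * |(k : ℝ)| * Real.pi := by
      rw [abs_mul, abs_mul, abs_of_pos Real.pi_pos, abs_two]
    have htri := abs_sub_abs_le_abs_sub (2 * (k : ℝ) * Real.pi) (-x)
    rw [abs_neg, sub_neg_eq_add, add_comm _ x] at htri
    nlinarith [Real.pi_pos]

/-- A closed real interval of length `B - A` contains at most `B - A + 1` integers. -/
lemma Int.card_Icc_ceil_floor_le {A B : ℝ} (hAB : A ≤ B) :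
    ((Finset.Icc ⌈A⌉ ⌊B⌋).card : ℝ) ≤ B - A + 1 := by
  rw [Int.card_Icc]
  have hcast : (((⌊B⌋ + 1 - ⌈A⌉).toNat : ℤ) : ℝ) ≤ B - A + 1 := by
    rw [Int.toNat_eq_max, Int.cast_max]
    refine max_le ?_ (by push_cast; linarith)
    push_cast
    linarith [Int.floor_le B, Int.le_ceil A]
  exact_mod_cast hcast

/-- Among representatives modulo `2π` of the grid `2πs/T`, `s < T`, at most `Tb/π + 1` lie at
distance less than `b` from a given point. -/
lemma card_frequency_grid_near_le {T : ℕ} (hT : 0 < T) {b : ℝ} (hb : 0 < b) (ω : ℝ) (u : ℕ → ℝ)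
    (hu : ∀ s < T, ∃ k : ℤ, u s = 2 * Real.pi * s / T + 2 * (k : ℝ) * Real.pi) :
    (((Finset.range T).filter fun s => |ω - u s| < b).card : ℝ) ≤ T * b / Real.pi + 1 := by
  have hpi := Real.pi_pos
  have hTpos : (0 : ℝ) < T := by exact_mod_cast hT
  choose! k hk using hu
  set A : ℝ := T * (ω - b) / (2 * Real.pi) with hA
  set B : ℝ := T * (ω + b) / (2 * Real.pi) with hB
  have hBA : B - A = T * b / Real.pi := by
    rw [hA, hB]; field_simp; ring
  have hAB : A ≤ B := by
    have : 0 < T * b / Real.pi := by positivity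
    linarith
  have hcard : ((Finset.range T).filter fun s => |ω - u s| < b).card ≤
      (Finset.Icc ⌈A⌉ ⌊B⌋).card := by
    apply Finset.card_le_card_of_injOn (fun s : ℕ => (s : ℤ) + k s * T)
    · intro s hs
      simp only [Finset.coe_filter, Finset.mem_range, Set.mem_ofPred_eq] at hs
      obtain ⟨hsT, hsb⟩ := hs
      rw [abs_lt] at hsb
      have hgrid : ((s : ℝ) + k s * T) * (2 * Real.pi) = T * u s := by
        rw [hk s hsT]; field_simp
      simp only [Finset.coe_Icc, Set.mem_Icc, Int.ceil_le, Int.le_floor]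
      push_cast
      rw [hA, hB, div_le_iff₀ (by positivity), le_div_iff₀ (by positivity), hgrid]
      constructor <;> gcongr <;> linarith
    · intro s hs t ht hst
      simp only [Finset.coe_filter, Finset.mem_range, Set.mem_ofPred_eq] at hs ht
      have hmod := congrArg (· % (T : ℤ)) hst
      simp only [Int.add_mul_emod_self_right] at hmod
      rw [Int.emod_eq_of_lt (by lia) (by lia), Int.emod_eq_of_lt (by lia) (by lia)] at hmod
      exact_mod_cast hmod
  calc (((Finset.range T).filter fun s => |ω - u s| < b).card : ℝ)
      ≤ (Finset.Icc ⌈A⌉ ⌊B⌋).card := by exact_mod_cast hcard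
    _ ≤ B - A + 1 := Int.card_Icc_ceil_floor_le hAB
    _ = T * b / Real.pi + 1 := by rw [hBA]

/-- **Riemann-sum kernel lemma, part (B).**
Let `W` be bounded, of bounded variation, supported in `[-1,1]`, with `∫ W = 1`.  Then there
is `C > 0` (depending only on `W, p`) such that for all `T ≥ 2`, `b ∈ (0, π/2)`,
`ω ∈ [0, 2π]`, and any admissible choice of grid points `u`,
`(2π/T) ∑_{s<T} |W_b(ω - u s)| · |ω - u s|^p ≤ C·(b^p + 1/(T·b))`. -/
theorem kernel_riemann_sum_B (p : ℕ) (hp : 1 ≤ p) (W : ℝ → ℝ)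
    (hWbd : ∃ M, ∀ x, |W x| ≤ M)
    (hBV : BoundedVariationOn W Set.univ)
    (hsupp : ∀ x : ℝ, 1 ≤ |x| → W x = 0)
    (hint : (∫ x, W x) = 1) :
    ∃ C > (0 : ℝ), ∀ T : ℕ, 2 ≤ T → ∀ b : ℝ, 0 < b → b < Real.pi / 2 →
      ∀ ω ∈ Set.Icc (0 : ℝ) (2 * Real.pi),
      ∀ u : ℕ → ℝ,
        (∀ s < T, (∃ k : ℤ, u s = 2 * Real.pi * s / T + 2 * (k : ℝ) * Real.pi) ∧
          |ω - u s| ≤ Real.pi) →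
        (2 * Real.pi / T) * ∑ s ∈ Finset.range T, |Wper W b (ω - u s)| * |ω - u s| ^ p ≤
          C * (b ^ p + 1 / (T * b)) := by
  obtain ⟨M, hM⟩ := hWbd
  have hM0 : 0 ≤ M := (abs_nonneg _).trans (hM 0)
  have hpi := Real.pi_pos
  have hC : 0 ≤ 2 * Real.pi * M * (Real.pi / 2) ^ p := by positivity
  refine ⟨2 * M + 2 * Real.pi * M * (Real.pi / 2) ^ p + 1, by positivity, ?_⟩
  intro T hT b hb hbpi ω _ u hu
  have hTpos : (0 : ℝ) < T := by exact_mod_cast (by lia : 0 < T)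
  have hterm : ∀ s ∈ Finset.range T, |Wper W b (ω - u s)| * |ω - u s| ^ p ≤
      if |ω - u s| < b then 1 / b * M * b ^ p else 0 := by
    intro s hs
    rw [Wper_eq_of_abs_le_pi hsupp hb (by linarith) (hu s (Finset.mem_range.mp hs)).2]
    split_ifs with hnear
    · rw [abs_mul, abs_of_pos (by positivity : 0 < 1 / b)]
      gcongr
      exact hM _
    · rw [hsupp _ (by rw [abs_div, abs_of_pos hb, one_le_div hb]; exact not_lt.mp hnear)]
      simp
  have hcount := card_frequency_grid_near_le (by lia : 0 < T) hb ω u fun s hs => (hu s hs).1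
  have hbp : b ^ p ≤ (Real.pi / 2) ^ p := by gcongr
  calc (2 * Real.pi / T) * ∑ s ∈ Finset.range T, |Wper W b (ω - u s)| * |ω - u s| ^ p
      ≤ (2 * Real.pi / T) * ((T * b / Real.pi + 1) * (1 / b * M * b ^ p)) := by
        gcongr
        refine (Finset.sum_le_sum hterm).trans ?_
        rw [← Finset.sum_filter, Finset.sum_const, nsmul_eq_mul]
        gcongr
    _ = 2 * M * b ^ p + 2 * Real.pi * M * b ^ p * (1 / (T * b)) := by
        field_simp
    _ ≤ 2 * M * b ^ p + 2 * Real.pi * M * (Real.pi / 2) ^ p * (1 / (T * b)) := by gcongr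
    _ ≤ (2 * M + 2 * Real.pi * M * (Real.pi / 2) ^ p + 1) * (b ^ p + 1 / (T * b)) := by
        have hbp0 : 0 < b ^ p := by positivity
        have hTb : 0 < 1 / (T * b) := by positivity
        nlinarith [mul_nonneg hC hbp0.le, mul_nonneg hM0 hTb.le]
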